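/- Let f and g be smooth real-valued functions on S¹ with zero mean. Then −[ ∂₁g·H∂₁²f + ∂₁(g·H∂₁²f) + ∂₁(∂₁²f·Hg) − 2Λ(g·∂₁²f) + g·Λ∂₁²f ] = ∂₁([H,Hg]H∂₁²f) + Λ(Hg·H∂₁²f) pointwise on S¹. -/

import Mathlib

open Complex Filter MeasureTheory

noncomputable section

instance : Fact (0 < 2 * Real.pi) := ⟨by positivity⟩

/-- Hilbert transform on the circle `S¹ = ℝ/2πℤ`: Fourier multiplier `-i·sgn k`. -/
def Hop (f : AddCircle (2 * Real.pi) → ℂ) : AddCircle (2 * Real.pi) → ℂ :=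
  fun x => ∑' k : ℤ, (-Complex.I) * (k.sign : ℂ) * fourierCoeff f k * fourier k x

/-- `Λⁿ`: Fourier multiplier `|k|ⁿ`. -/
def Lamn (n : ℕ) (f : AddCircle (2 * Real.pi) → ℂ) : AddCircle (2 * Real.pi) → ℂ :=
  fun x => ∑' k : ℤ, ((|k| : ℤ) : ℂ) ^ n * fourierCoeff f k * fourier k x

/-- `∂₁ⁿ`: Fourier multiplier `(ik)ⁿ` (spatial derivative of smooth periodic functions). -/
def Dn (n : ℕ) (f : AddCircle (2 * Real.pi) → ℂ) : AddCircle (2 * Real.pi) → ℂ :=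
  fun x => ∑' k : ℤ, (Complex.I * (k : ℂ)) ^ n * fourierCoeff f k * fourier k x

/-- A smooth (rapidly decaying Fourier coefficients) real-valued zero-mean function on `S¹`,
given by the sum of its Fourier series. -/
def IsNice (f : AddCircle (2 * Real.pi) → ℂ) : Prop :=
  (∀ n : ℕ, Summable fun k : ℤ => ((|k| : ℤ) : ℝ) ^ n * ‖fourierCoeff f k‖) ∧
  (∀ x, (f x).im = 0) ∧ fourierCoeff f 0 = 0 ∧
  (∀ x, f x = ∑' k : ℤ, fourierCoeff f k * fourier k x)

/-- `u` is the absolutely convergent sum of the modes `C i * e^{i φ(i) x}`. -/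
def ModeRep {ι : Type} (φ : ι → ℤ) (C : ι → ℂ) (u : AddCircle (2 * Real.pi) → ℂ) : Prop :=
  Summable (fun i => ‖C i‖) ∧ ∀ x, HasSum (fun i => C i * fourier (φ i) x) (u x)

theorem HasSum.congr_fun_aux {ι : Type} {f g : ι → ℂ} {a : ℂ} (h : HasSum f a)
    (e : ∀ i, g i = f i) : HasSum g a := by
  rwa [show g = f from funext e]

theorem norm_four (k : ℤ) (x : AddCircle (2 * Real.pi)) : ‖(fourier k x : ℂ)‖ = 1 := by
  rw [fourier_apply]; exact Circle.norm_coe _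

theorem rep_of {ι : Type} {φ : ι → ℤ} {C : ι → ℂ} {u : AddCircle (2 * Real.pi) → ℂ}
    (h : Summable (fun i => ‖C i‖)) (hu : ∀ x, u x = ∑' i, C i * fourier (φ i) x) :
    ModeRep φ C u := by
  refine ⟨h, fun x => ?_⟩
  rw [hu x]
  apply Summable.hasSum
  apply Summable.of_norm
  simpa only [norm_mul, norm_four, mul_one] using h

theorem coeff_rep {ι : Type} [Countable ι] {φ : ι → ℤ} {C : ι → ℂ}
    {u : AddCircle (2 * Real.pi) → ℂ} (h : ModeRep φ C u) (k : ℤ) :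
    fourierCoeff u k = ∑' i : φ ⁻¹' {k}, C i := by
  have hint : ∀ i, Integrable (fun t : AddCircle (2 * Real.pi) =>
      (fourier (-k) t : ℂ) * (C i * fourier (φ i) t)) AddCircle.haarAddCircle := by
    intro i
    apply Continuous.integrable_of_hasCompactSupport
    · fun_prop
    · exact HasCompactSupport.of_compactSpace _
  have key := hasSum_integral_of_summable_integral_norm hint (by
    simpa only [norm_mul, norm_four, mul_one, one_mul, integral_const, probReal_univ, one_smul] using h.1)
  have e1 : ∀ i, ∫ t : AddCircle (2 * Real.pi), (fourier (-k) t : ℂ) * (C i * fourier (φ i) t)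
      ∂AddCircle.haarAddCircle = (φ ⁻¹' {k}).indicator C i := by
    intro i
    have h1 := fourierCoeff.const_mul (T := 2 * Real.pi) (fun t => (fourier (φ i) t : ℂ)) (C i) k
    have h2 : fourierCoeff (fun t : AddCircle (2 * Real.pi) => (fourier (φ i) t : ℂ)) k
        = (Pi.single (φ i) (1:ℂ) : ℤ → ℂ) k :=
      congrFun (fourierCoeff_fourier (T := 2 * Real.pi) (φ i)) k
    rw [h2] at h1
    simp only [fourierCoeff, smul_eq_mul] at h1
    rw [h1]
    by_cases hk : φ i = k
    · simp [Set.indicator, hk]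
    · simp [Set.indicator, hk, Pi.single_apply, Ne.symm hk]
  have e2 : ∀ t, ∑' i, (fourier (-k) t : ℂ) * (C i * fourier (φ i) t)
      = (fourier (-k) t : ℂ) * u t := fun t => ((h.2 t).mul_left _).tsum_eq
  simp only [e1, e2] at key
  rw [tsum_subtype, key.tsum_eq]
  rfl

theorem rep_mult {ι : Type} [Countable ι] {φ : ι → ℤ} {C : ι → ℂ}
    {u : AddCircle (2 * Real.pi) → ℂ} (h : ModeRep φ C u) (m : ℤ → ℂ)
    (hm : Summable (fun i => ‖m (φ i) * C i‖)) :
    ModeRep φ (fun i => m (φ i) * C i) (fun x => ∑' k : ℤ, m k * fourierCoeff u k * fourier k x) := by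
  apply rep_of hm
  intro x
  have hs : Summable (fun i => m (φ i) * C i * fourier (φ i) x) := by
    apply Summable.of_norm
    simpa only [norm_mul, norm_four, mul_one] using hm
  rw [← (hs.hasSum.tsum_fiberwise φ).tsum_eq]
  congr 1; funext k
  rw [coeff_rep h k, ← tsum_mul_left, ← tsum_mul_right]
  congr 1; funext i
  have : φ i = k := i.2
  rw [this]

theorem rep_mul {c d : ℤ → ℂ} {u v : AddCircle (2 * Real.pi) → ℂ}
    (hu : ModeRep id c u) (hv : ModeRep id d v) :
    ModeRep (fun p : ℤ × ℤ => p.1 + p.2) (fun p => c p.1 * d p.2) (fun x => u x * v x) := by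
  refine ⟨hu.1.mul_norm hv.1, fun x => ?_⟩
  have h1 : Summable (fun k : ℤ => ‖c k * (fourier k x : ℂ)‖) := by
    simpa only [norm_mul, norm_four, mul_one] using hu.1
  have h2 : Summable (fun k : ℤ => ‖d k * (fourier k x : ℂ)‖) := by
    simpa only [norm_mul, norm_four, mul_one] using hv.1
  have hux := hu.2 x
  have hvx := hv.2 x
  simp only [id] at hux hvx
  have h3 := summable_mul_of_summable_norm h1 h2
  have := HasSum.mul hux hvx h3
  refine this.congr_fun_aux (fun p => ?_)
  have e : (fourier (p.1 + p.2) x : ℂ) = fourier p.1 x * fourier p.2 x := fourier_add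
  beta_reduce
  rw [e]
  generalize (fourier p.1 x : ℂ) = z
  generalize (fourier p.2 x : ℂ) = w
  ring

theorem sign_norm (k : ℤ) : ‖(-Complex.I) * (k.sign : ℂ)‖ ≤ 1 := by
  rcases lt_trichotomy k 0 with h | h | h
  · simp [Int.sign_eq_neg_one_of_neg h]
  · simp [h]
  · simp [Int.sign_eq_one_of_pos h]

theorem rep_hop {ι : Type} [Countable ι] {φ : ι → ℤ} {C : ι → ℂ}
    {u : AddCircle (2 * Real.pi) → ℂ} (h : ModeRep φ C u) :
    ModeRep φ (fun i => (-Complex.I) * ((φ i).sign : ℂ) * C i) (Hop u) := by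
  apply rep_mult h (fun k => (-Complex.I) * (k.sign : ℂ))
  refine Summable.of_nonneg_of_le (fun _ => norm_nonneg _) (fun i => ?_) h.1
  rw [norm_mul]
  exact mul_le_of_le_one_left (norm_nonneg _) (sign_norm _)

theorem rep_D {ι : Type} [Countable ι] {φ : ι → ℤ} {C : ι → ℂ}
    {u : AddCircle (2 * Real.pi) → ℂ} (h : ModeRep φ C u) (n : ℕ)
    (hs : Summable (fun i => ((|φ i| : ℤ) : ℝ) ^ n * ‖C i‖)) :
    ModeRep φ (fun i => (Complex.I * (φ i : ℂ)) ^ n * C i) (Dn n u) := by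
  apply rep_mult h (fun k => (Complex.I * (k : ℂ)) ^ n)
  simpa [norm_mul, norm_pow] using hs

theorem rep_L {ι : Type} [Countable ι] {φ : ι → ℤ} {C : ι → ℂ}
    {u : AddCircle (2 * Real.pi) → ℂ} (h : ModeRep φ C u) (n : ℕ)
    (hs : Summable (fun i => ((|φ i| : ℤ) : ℝ) ^ n * ‖C i‖)) :
    ModeRep φ (fun i => ((|φ i| : ℤ) : ℂ) ^ n * C i) (Lamn n u) := by
  apply rep_mult h (fun k => ((|k| : ℤ) : ℂ) ^ n)
  have : ∀ k : ℤ, ‖((|k| : ℤ) : ℂ)‖ = ((|k| : ℤ) : ℝ) := by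
    intro k
    rw [Complex.norm_intCast]; simp
  simpa only [norm_mul, norm_pow, this] using hs

theorem rep_sub {ι : Type} {φ : ι → ℤ} {C D : ι → ℂ}
    {u v : AddCircle (2 * Real.pi) → ℂ} (h : ModeRep φ C u) (h' : ModeRep φ D v) :
    ModeRep φ (fun i => C i - D i) (fun x => u x - v x) := by
  refine ⟨Summable.of_nonneg_of_le (fun _ => norm_nonneg _) (fun i => norm_sub_le _ _)
    (h.1.add h'.1), fun x => ?_⟩
  refine ((h.2 x).sub (h'.2 x)).congr_fun_aux (fun i => ?_)
  ring

theorem symbol_id (a b : ℤ) (ha : a ≠ 0) (hb : b ≠ 0) :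
    2 * |a + b| * (1 + a.sign * b.sign) = 2 * (a + b) * (a.sign + b.sign) := by
  rcases lt_or_gt_of_ne ha with h | h <;> rcases lt_or_gt_of_ne hb with h' | h'
  · rw [Int.sign_eq_neg_one_of_neg h, Int.sign_eq_neg_one_of_neg h', abs_of_neg (by omega)]; ring
  · rw [Int.sign_eq_neg_one_of_neg h, Int.sign_eq_one_of_pos h']; ring
  · rw [Int.sign_eq_neg_one_of_neg h', Int.sign_eq_one_of_pos h]; ring
  · rw [Int.sign_eq_one_of_pos h, Int.sign_eq_one_of_pos h', abs_of_pos (by omega)]; ring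

theorem symbol_main (a b : ℤ) (ha : a ≠ 0) (hb : b ≠ 0) :
    -(a * b.sign + (a + b) * b.sign + (a + b) * a.sign - 2 * |a + b| + |b|)
      = -((a + b) * (a + b).sign) * a.sign * b.sign + (a + b) * a.sign * (b.sign * b.sign)
        - |a + b| * a.sign * b.sign := by
  have h := symbol_id a b ha hb
  have h1 : (a + b) * (a + b).sign = |a + b| := by rw [mul_comm, Int.sign_mul_self_eq_abs]
  have h2 : b * b.sign = |b| := by rw [mul_comm, Int.sign_mul_self_eq_abs]
  have h3 : b.sign * b.sign = 1 := by
    rcases lt_or_gt_of_ne hb with h' | h'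
    · simp [Int.sign_eq_neg_one_of_neg h']
    · simp [Int.sign_eq_one_of_pos h']
  rw [h1, h3]
  linear_combination h + h2

/-- Grouping of the `O(α₂)` nonlinear terms:
`−[∂₁g·H∂₁²f + ∂₁(g·H∂₁²f) + ∂₁(∂₁²f·Hg) − 2Λ(g·∂₁²f) + g·Λ∂₁²f]
  = ∂₁([H,Hg]H∂₁²f) + Λ(Hg·H∂₁²f)` pointwise. -/
theorem alpha2_grouping (f g : AddCircle (2 * Real.pi) → ℂ)
    (hf : IsNice f) (hg : IsNice g) :
    ∀ x, -(Dn 1 g x * Hop (Dn 2 f) x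
          + Dn 1 (fun y => g y * Hop (Dn 2 f) y) x
          + Dn 1 (fun y => Dn 2 f y * Hop g y) x
          - 2 * Lamn 1 (fun y => g y * Dn 2 f y) x
          + g x * Lamn 1 (Dn 2 f) x)
      = Dn 1 (fun y => Hop (fun z => Hop g z * Hop (Dn 2 f) z) y
            - Hop g y * Hop (Hop (Dn 2 f)) y) x
        + Lamn 1 (fun y => Hop g y * Hop (Dn 2 f) y) x := by
  intro x
  obtain ⟨hfs, -, hf0, hfx⟩ := hf
  obtain ⟨hgs, -, hg0, hgx⟩ := hg
  have rf : ModeRep id (fourierCoeff f) f := rep_of (by simpa using hfs 0) hfx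
  have rg : ModeRep id (fourierCoeff g) g := rep_of (by simpa using hgs 0) hgx
  have rF := rep_D rf 2 (hfs 2)
  have hd0 : (Complex.I * ((id (0:ℤ) : ℤ) : ℂ)) ^ 2 * fourierCoeff f 0 = 0 := by simp
  have hds : ∀ n : ℕ, Summable fun k : ℤ => ((|k| : ℤ) : ℝ) ^ n *
      ‖(Complex.I * ((id k : ℤ) : ℂ)) ^ 2 * fourierCoeff f k‖ := by
    intro n
    convert hfs (n + 2) using 2 with k
    simp [norm_mul, norm_pow, pow_add]; ring
  generalize Dn 2 f = F at *
  generalize hd : (fun k : ℤ => (Complex.I * ((id k : ℤ) : ℂ)) ^ 2 * fourierCoeff f k) = d at rF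
  replace hd : ∀ k : ℤ, (Complex.I * ((id k : ℤ) : ℂ)) ^ 2 * fourierCoeff f k = d k :=
    fun k => congrFun hd k
  simp only [hd] at hd0 hds
  generalize fourierCoeff g = c at *
  clear hd hfx hgx rf hf0 hfs
  have S : Summable fun p : ℤ × ℤ => ((|p.1 + p.2| : ℤ) : ℝ) ^ 1 * ‖c p.1 * d p.2‖ := by
    have n1 : ∀ (c : ℤ → ℂ) n, Summable (fun k : ℤ => ((|k| : ℤ) : ℝ) ^ n * ‖c k‖) →
      Summable fun k : ℤ => ‖(k:ℂ) ^ n * c k‖ := by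
      intro c n h
      simpa [norm_mul, norm_pow] using h
    have s1 := (n1 _ _ (hgs 1)).mul_norm (n1 _ _ (hds 0))
    have s2 := (n1 _ _ (hgs 0)).mul_norm (n1 _ _ (hds 1))
    refine Summable.of_nonneg_of_le (fun _ => by positivity) (fun p => ?_) (s1.add s2)
    have : |(p.1:ℝ) + p.2| ≤ |(p.1:ℝ)| + |(p.2:ℝ)| := abs_add_le _ _
    simp only [norm_mul, norm_pow, pow_one, pow_zero, one_mul, norm_one, Complex.norm_intCast]
    push_cast
    calc _ ≤ (|(p.1:ℝ)| + |(p.2:ℝ)|) * (‖c p.1‖ * ‖d p.2‖) := by gcongr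
      _ = _ := by ring
  have S' : ∀ C : ℤ × ℤ → ℂ, (∃ K : ℝ, ∀ p, ‖C p‖ ≤ K * ‖c p.1 * d p.2‖) →
      Summable fun p : ℤ × ℤ => ((|p.1 + p.2| : ℤ) : ℝ) ^ 1 * ‖C p‖ := by
    rintro C ⟨K, hK⟩
    refine Summable.of_nonneg_of_le (fun _ => by positivity) (fun p => ?_) (S.mul_left K)
    calc _ ≤ ((|p.1 + p.2| : ℤ) : ℝ) ^ 1 * (K * ‖c p.1 * d p.2‖) := by
          gcongr; exact hK p
      _ = _ := by ring
  have rHg := rep_hop rg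
  have rHF := rep_hop rF
  have rHHF := rep_hop rHF
  have hsg := sign_norm
  have t1 := rep_mul (rep_D rg 1 (hgs 1)) rHF
  have t2 := rep_D (rep_mul rg rHF) 1 (S' _ ⟨1, fun p => by
    have := hsg p.2
    simp only [id]
    calc _ = ‖-Complex.I * (p.2.sign : ℂ)‖ * ‖c p.1 * d p.2‖ := by simp only [norm_mul]; ring
      _ ≤ _ := by gcongr⟩)
  have t3 := rep_D (rep_mul rHg rF) 1 (S' _ ⟨1, fun p => by
    have := hsg p.1
    simp only [id]
    calc _ = ‖-Complex.I * (p.1.sign : ℂ)‖ * ‖c p.1 * d p.2‖ := by simp only [norm_mul]; ring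
      _ ≤ _ := by gcongr⟩)
  have t4 := rep_L (rep_mul rg rF) 1 S
  have t5 := rep_mul rg (rep_L rF 1 (hds 1))
  have b6 : ∀ p : ℤ × ℤ, ‖-Complex.I * (p.1.sign : ℂ) * c p.1 *
      (-Complex.I * (p.2.sign : ℂ) * d p.2)‖ ≤ 1 * ‖c p.1 * d p.2‖ := fun p => by
    have h1 := hsg p.1
    have h2 := hsg p.2
    calc _ = ‖-Complex.I * (p.1.sign : ℂ)‖ * ‖-Complex.I * (p.2.sign : ℂ)‖ * ‖c p.1 * d p.2‖ := by
          simp only [norm_mul]; ring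
      _ ≤ 1 * 1 * ‖c p.1 * d p.2‖ := by gcongr
      _ = _ := by ring
  have t6 := rep_D (rep_sub (rep_hop (rep_mul rHg rHF)) (rep_mul rHg rHHF)) 1 (S' _ ⟨2, fun p => by
    have h0 := hsg (p.1 + p.2)
    have h2 := hsg p.2
    have h3 := b6 p
    simp only [id]
    refine (norm_sub_le _ _).trans ?_
    have e1 : ‖-Complex.I * ((p.1 + p.2).sign : ℂ) * (-Complex.I * (p.1.sign : ℂ) * c p.1 *
      (-Complex.I * (p.2.sign : ℂ) * d p.2))‖ ≤ 1 * (1 * ‖c p.1 * d p.2‖) := by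
      rw [norm_mul]; gcongr
    have e2 : ‖-Complex.I * (p.1.sign : ℂ) * c p.1 *
      (-Complex.I * (p.2.sign : ℂ) * (-Complex.I * (p.2.sign : ℂ) * d p.2))‖
        ≤ 1 * (1 * ‖c p.1 * d p.2‖) := by
      calc _ = ‖-Complex.I * (p.2.sign : ℂ)‖ * ‖-Complex.I * (p.1.sign : ℂ) * c p.1 *
          (-Complex.I * (p.2.sign : ℂ) * d p.2)‖ := by simp only [norm_mul]; ring
        _ ≤ _ := by gcongr
    linarith⟩)
  have t7 := rep_L (rep_mul rHg rHF) 1 (S' _ ⟨1, b6⟩)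
  have sw : (fun y => F y * Hop g y) = fun y => Hop g y * F y := by
    funext y; ring
  rw [sw]
  have L := (((((t1.2 x).add (t2.2 x)).add (t3.2 x)).sub ((t4.2 x).mul_left 2)).add (t5.2 x)).neg
  have R := (t6.2 x).add (t7.2 x)
  refine L.unique ?_
  refine R.congr_fun_aux (fun p => ?_)
  obtain ⟨a, b⟩ := p
  simp only [id, pow_one]
  by_cases ha : a = 0
  · subst ha; simp [hg0]
  by_cases hb : b = 0
  · subst hb
    have : d 0 = 0 := hd0
    simp [this]
  have key := congrArg (fun z : ℤ => (z : ℂ)) (symbol_main a b ha hb)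
  simp only [Int.cast_add, Int.cast_mul, Int.cast_neg, Int.cast_sub, Int.cast_ofNat] at key ⊢
  have I2 : Complex.I ^ 2 = -1 := Complex.I_sq
  have I4 : Complex.I ^ 4 = 1 := Complex.I_pow_four
  ring_nf at key ⊢
  simp only [I2, I4]
  linear_combination (c a * d b * fourier (a + b) x) * key
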